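/- Let M be a module over the Neveu-Schwarz algebra NS whose restriction to U(𝔥) = ℂ[L_0] is free of rank 2. Then, up to parity change, M is isomorphic to Ω_NS(λ, α) for some λ ∈ ℂ* and α ∈ ℂ. -/

import Mathlib

/-!
Since `ℂ[L_0]` is a principal ideal domain, each homogeneous part of `M` is free, and the ranks
add up to `2`. If one part were zero, all `G_r` and hence `L_0` would vanish, contradicting
freeness; so both parts are copies of `ℂ[X]` with `L_0` acting as `X` (`exists_coordinates`).
As `L_m` and `G_r` commute with `L_0` up to a shift, each of them is a shift followed by
multiplication by a structure polynomial (`NSRep.exists_coeffs`): `p_r`, `q_r` for `G_r` from even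
to odd and back, `a_m`, `b_m` for `L_m` on the even and the odd part.

Evaluating `G_r G_{-r} + G_{-r} G_r = 2 L_0` on both parts shows that `q_{-r}(x) p_r(x - r)` is
monic linear (`Coeffs.exists_linear`), so exactly one of `p_r`, `q_{-r}` is constant and the other
has degree one. If `p_{1/2}` and `p_{-1/2}` had different degrees, one of `L_1`, `L_{-1}` would act
by a multiple of a pure shift, and its bracket with `G_{-3/2}` or `G_{3/2}` would exhibit the
linear one of `p_{1/2}`, `p_{-1/2}` as a first difference of a polynomial of degree at most one,
which is constant. Up to parity, `p_{1/2}` and `p_{-1/2}` are therefore constants; together with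
`q_{-1/2}` they define `λ`, `α` and the scale of the odd generator. The brackets of `L_1` and
`L_{-1}` with `G_r` then determine every `p_r`, `q_r` by induction: the difference equation that
results has only one solution of degree at most one (`difference_eq_unique`). Finally the `L_m`
are anticommutators of the `G_r`.
-/

open Polynomial

/-- `L_m` on the even part `ℂ[x]` of `Ω_NS(λ,α)`: `f ↦ λ^m (x + mα) f(x+m)`. -/
noncomputable def l0 (l a : ℂ) (m : ℤ) (f : Polynomial ℂ) : Polynomial ℂ :=
  l ^ m • ((X + C ((m : ℂ) * a)) * f.comp (X + C (m : ℂ)))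

/-- `L_m` on the odd part `ℂ[y]`: `g ↦ λ^m (y + m(α+1/2)) g(y+m)`. -/
noncomputable def nl1 (l a : ℂ) (m : ℤ) (g : Polynomial ℂ) : Polynomial ℂ :=
  l ^ m • ((X + C ((m : ℂ) * (a + 1/2))) * g.comp (X + C (m : ℂ)))

/-- `G_r` (with `r = k + 1/2`, `k ∈ ℤ`) from the even to the odd part:
`f(x) ↦ λ^{r−1/2} f(y+r)`. -/
noncomputable def ng01 (l : ℂ) (k : ℤ) (f : Polynomial ℂ) : Polynomial ℂ :=
  l ^ k • f.comp (X + C ((k : ℂ) + 1/2))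

/-- `G_r` (with `r = k + 1/2`) from the odd to the even part:
`g(y) ↦ λ^{r+1/2} (x + 2rα) g(x+r)`. -/
noncomputable def ng10 (l a : ℂ) (k : ℤ) (g : Polynomial ℂ) : Polynomial ℂ :=
  l ^ (k + 1) • ((X + C (2 * ((k : ℂ) + 1/2) * a)) * g.comp (X + C ((k : ℂ) + 1/2)))

/-- A representation of the Neveu-Schwarz algebra `NS` on a `ℤ₂`-graded complex vector
space `M = M0 ⊕ M1`: `LE`/`LO` are the actions of `L_m` on the even/odd part, and
`GEO k`/`GOE k` the actions of `G_{k+1/2}` (`k ∈ ℤ`) from even to odd and back.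
The axioms are `[L_m,L_n]=(m−n)L_{m+n}`, `[L_m,G_r]=(m/2−r)G_{m+r}`,
`[G_r,G_s]=2L_{r+s}` (an anticommutator), with `r = k+1/2`, `s = j+1/2`. -/
structure NSRep (M0 M1 : Type*) [AddCommGroup M0] [Module ℂ M0]
    [AddCommGroup M1] [Module ℂ M1] where
  LE : ℤ → M0 →ₗ[ℂ] M0
  LO : ℤ → M1 →ₗ[ℂ] M1
  GEO : ℤ → M0 →ₗ[ℂ] M1
  GOE : ℤ → M1 →ₗ[ℂ] M0
  ll_e : ∀ (m n : ℤ) (v : M0),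
    LE m (LE n v) - LE n (LE m v) = ((m - n : ℤ) : ℂ) • LE (m + n) v
  ll_o : ∀ (m n : ℤ) (w : M1),
    LO m (LO n w) - LO n (LO m w) = ((m - n : ℤ) : ℂ) • LO (m + n) w
  lg_e : ∀ (m k : ℤ) (v : M0),
    LO m (GEO k v) - GEO k (LE m v) = ((m : ℂ) / 2 - ((k : ℂ) + 1/2)) • GEO (m + k) v
  lg_o : ∀ (m k : ℤ) (w : M1),
    LE m (GOE k w) - GOE k (LO m w) = ((m : ℂ) / 2 - ((k : ℂ) + 1/2)) • GOE (m + k) w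
  gg_e : ∀ (k j : ℤ) (v : M0),
    GOE k (GEO j v) + GOE j (GEO k v) = (2 : ℂ) • LE (k + j + 1) v
  gg_o : ∀ (k j : ℤ) (w : M1),
    GEO k (GOE j w) + GEO j (GOE k w) = (2 : ℂ) • LO (k + j + 1) w


/-! ### Splitting the free module -/

/-- A direct summand of a free module of rank `2` over a principal ideal domain is free, so the
two summands have ranks `(1, 1)`, `(2, 0)` or `(0, 2)`. -/
lemma split_rank_two {R M N : Type*} [CommRing R] [IsDomain R] [IsPrincipalIdealRing R]
    [AddCommGroup M] [Module R M] [AddCommGroup N] [Module R N] (e : (R × R) ≃ₗ[R] M × N) :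
    (Nonempty (M ≃ₗ[R] R) ∧ Nonempty (N ≃ₗ[R] R)) ∨ Subsingleton M ∨ Subsingleton N := by
  have hMN : Module.Free R (M × N) := Module.Free.of_equiv e
  have hM : Module.Projective R M :=
    Module.Projective.of_split (LinearMap.inl R M N) (LinearMap.fst R M N) (by ext; simp)
  have hN : Module.Projective R N :=
    Module.Projective.of_split (LinearMap.inr R M N) (LinearMap.snd R M N) (by ext; simp)
  have fM : Module.Finite R M := Module.Finite.of_surjective
    (LinearMap.fst R M N ∘ₗ e.toLinearMap) (Prod.fst_surjective.comp e.surjective)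
  have fN : Module.Finite R N := Module.Finite.of_surjective
    (LinearMap.snd R M N ∘ₗ e.toLinearMap) (Prod.snd_surjective.comp e.surjective)
  have tM : Module.Free R M := Module.free_of_finite_type_torsion_free'
  have tN : Module.Free R N := Module.free_of_finite_type_torsion_free'
  have h := e.finrank_eq
  rw [Module.finrank_prod, Module.finrank_prod, Module.finrank_self] at h
  rcases Nat.eq_zero_or_pos (Module.finrank R M) with h0 | h0
  · exact Or.inr (Or.inl (Module.finrank_zero_iff.1 h0))
  rcases Nat.eq_zero_or_pos (Module.finrank R N) with h1 | h1
  · exact Or.inr (Or.inr (Module.finrank_zero_iff.1 h1))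
  left
  exact ⟨⟨LinearEquiv.ofFinrankEq M R (by rw [Module.finrank_self]; omega)⟩,
    ⟨LinearEquiv.ofFinrankEq N R (by rw [Module.finrank_self]; omega)⟩⟩

/-- If `ℂ[T]`, with `T = E ⊕ O`, acts freely of rank `2` on `M0 ⊕ M1`, and the two summands are
nonzero, then both `E` and `O` are conjugate to multiplication by `X` on `ℂ[X]`. -/
lemma exists_coordinates {M0 M1 : Type*}
    [AddCommGroup M0] [Module ℂ M0] [AddCommGroup M1] [Module ℂ M1]
    (E : M0 →ₗ[ℂ] M0) (O : M1 →ₗ[ℂ] M1)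
    (hfree : ∃ v w : M0 × M1,
      Function.Bijective (fun p : Polynomial ℂ × Polynomial ℂ =>
        Polynomial.aeval (E.prodMap O) p.1 v + Polynomial.aeval (E.prodMap O) p.2 w))
    (h0 : ¬ Subsingleton M0) (h1 : ¬ Subsingleton M1) :
    ∃ (e0 : M0 ≃ₗ[ℂ] ℂ[X]) (e1 : M1 ≃ₗ[ℂ] ℂ[X]),
      (∀ v, e0 (E v) = X * e0 v) ∧ (∀ w, e1 (O w) = X * e1 w) := by
  obtain ⟨v, w, hb⟩ := hfree
  have key : ∀ (p : ℂ[X]) (u : M0 × M1),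
      aeval (E.prodMap O) p u = (aeval E p u.1, aeval O p u.2) := by
    intro p u
    have h := aeval_algHom_apply (LinearMap.prodMapAlgHom ℂ M0 M1) (E, O) p
    have h' : aeval (E.prodMap O) p = LinearMap.prodMapAlgHom ℂ M0 M1 (aeval (E, O) p) := h
    rw [h', aeval_prod_apply]
    rfl
  let iE := Module.AEval'.of E
  let iO := Module.AEval'.of O
  let φ : (ℂ[X] × ℂ[X]) →ₗ[ℂ[X]] Module.AEval' E × Module.AEval' O :=
    (LinearMap.toSpanSingleton ℂ[X] _ (iE v.1, iO v.2)).coprod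
      (LinearMap.toSpanSingleton ℂ[X] _ (iE w.1, iO w.2))
  have hφ : (φ : ℂ[X] × ℂ[X] → Module.AEval' E × Module.AEval' O) =
      (iE.prodCongr iO) ∘ (fun p : ℂ[X] × ℂ[X] =>
        aeval (E.prodMap O) p.1 v + aeval (E.prodMap O) p.2 w) := by
    funext p
    simp only [Function.comp, key]
    rfl
  have hφb : Function.Bijective φ := by
    rw [hφ]; exact (iE.prodCongr iO).bijective.comp hb
  rcases split_rank_two (LinearEquiv.ofBijective φ hφb) with ⟨⟨f0⟩, ⟨f1⟩⟩ | h | h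
  · refine ⟨iE ≪≫ₗ f0.restrictScalars ℂ, iO ≪≫ₗ f1.restrictScalars ℂ, fun u => ?_, fun u => ?_⟩
    · change f0 (iE (E u)) = X * f0 (iE u)
      rw [← smul_eq_mul, ← map_smul, Module.AEval'.X_smul_of]
    · change f1 (iO (O u)) = X * f1 (iO u)
      rw [← smul_eq_mul, ← map_smul, Module.AEval'.X_smul_of]
  · exact absurd iE.toEquiv.subsingleton h0
  · exact absurd iO.toEquiv.subsingleton h1

/-! ### Polynomials and shifts -/

/-- A linear operator on `ℂ[X]` that commutes with `X` up to the shift `X ↦ X + c` is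
determined by its value at `1`. -/
lemma shift_operator (T : ℂ[X] →ₗ[ℂ] ℂ[X]) (c : ℂ) (h : ∀ f, T (X * f) = (X + C c) * T f)
    (f : ℂ[X]) : T f = f.comp (X + C c) * T 1 := by
  induction f using Polynomial.induction_on' with
  | add p q hp hq => rw [map_add, hp, hq, add_comp]; ring
  | monomial n a =>
    rw [← C_mul_X_pow_eq_monomial, ← smul_eq_C_mul, map_smul, smul_comp, smul_mul_assoc]
    congr 1
    induction n with
    | zero => simp
    | succ n ih => rw [pow_succ', h, ih, mul_comp]; simp [mul_assoc]

/-- A polynomial with a nonzero period is constant. -/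
lemma eq_C_of_periodic (P : ℂ[X]) (t : ℂ) (ht : t ≠ 0) (h : ∀ x, P.eval (x + t) = P.eval x) :
    P = C (P.eval 0) := by
  apply eq_of_infinite_eval_eq
  have hn : ∀ n : ℕ, P.eval (n * t) = P.eval 0 := by
    intro n
    induction n with
    | zero => simp
    | succ n ih => rw [show ((n + 1 : ℕ) : ℂ) * t = n * t + t by push_cast; ring, h, ih]
  refine Set.Infinite.mono (s := Set.range fun n : ℕ => (n : ℂ) * t) ?_ ?_
  · rintro _ ⟨n, rfl⟩
    simpa using hn n
  · apply Set.infinite_range_of_injective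
    intro m n hmn
    exact_mod_cast mul_right_cancel₀ ht hmn

/-! ### Degrees of the structure polynomials -/

/-- Structure polynomials of an `NS`-module whose even and odd parts are both identified with
`ℂ[X]` so that `L_0` is multiplication by `X`: `p k`, `q k` are the values of `G_{k+1/2}` at the
even and the odd generator, `a m`, `b m` those of `L_m`. The fields are the brackets
`[L_m,G_r]` and `[G_r,G_s]` evaluated at the two generators. -/
structure Coeffs (p q a b : ℤ → ℂ[X]) : Prop where
  a_zero : a 0 = X
  b_zero : b 0 = X
  lg_e : ∀ (m k : ℤ) (x : ℂ), (b m).eval x * (p k).eval (x + m)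
    - (p k).eval x * (a m).eval (x + (k + 1/2)) = (m / 2 - (k + 1/2)) * (p (m + k)).eval x
  lg_o : ∀ (m k : ℤ) (x : ℂ), (a m).eval x * (q k).eval (x + m)
    - (q k).eval x * (b m).eval (x + (k + 1/2)) = (m / 2 - (k + 1/2)) * (q (m + k)).eval x
  gg_e : ∀ (k j : ℤ) (x : ℂ), (q k).eval x * (p j).eval (x + (k + 1/2))
    + (q j).eval x * (p k).eval (x + (j + 1/2)) = 2 * (a (k + j + 1)).eval x
  gg_o : ∀ (k j : ℤ) (x : ℂ), (p k).eval x * (q j).eval (x + (k + 1/2))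
    + (p j).eval x * (q k).eval (x + (j + 1/2)) = 2 * (b (k + j + 1)).eval x

namespace Coeffs

variable {p q a b : ℤ → ℂ[X]}

lemma swap (h : Coeffs p q a b) : Coeffs q p b a :=
  ⟨h.b_zero, h.a_zero, h.lg_o, h.lg_e, h.gg_o, h.gg_e⟩

/-- With `r = k + 1/2`, the polynomial `A(x) = q_{-r}(x) p_r(x - r)` satisfies
`A(y + r) - A(y - r) = 2r`, by the two relations `G_r G_{-r} + G_{-r} G_r = 2 L_0`. Hence it is
monic of degree one. -/
lemma exists_linear (h : Coeffs p q a b) (k : ℤ) :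
    ∃ c : ℂ, q (-k - 1) * (p k).comp (X - C ((k : ℂ) + 1/2)) = X + C c := by
  have hr : (2 : ℂ) * ((k : ℂ) + 1/2) ≠ 0 := by
    have h2 : ((2 * k + 1 : ℤ) : ℂ) ≠ 0 := by
      rw [Int.cast_ne_zero]; omega
    push_cast at h2
    intro h3; apply h2; linear_combination h3
  have hper := eq_C_of_periodic (q (-k - 1) * (p k).comp (X - C ((k : ℂ) + 1/2)) - X) _ hr
    (by
      intro x
      have e1 := h.gg_e k (-k - 1) x
      have e2 := h.gg_o k (-k - 1) (x + (k + 1/2))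
      rw [show k + (-k - 1) + 1 = 0 by ring] at e1 e2
      rw [h.a_zero, eval_X] at e1
      rw [h.b_zero, eval_X] at e2
      push_cast at e1 e2
      rw [show x + (-(k : ℂ) - 1 + 1/2) = x - (k + 1/2) by ring] at e1
      rw [show x + ((k : ℂ) + 1/2) + (k + 1/2) = x + 2 * (k + 1/2) by ring,
        show x + ((k : ℂ) + 1/2) + (-(k : ℂ) - 1 + 1/2) = x by ring] at e2
      simp only [eval_sub, eval_mul, eval_comp, eval_X, eval_C]
      rw [show x + 2 * ((k : ℂ) + 1/2) - (k + 1/2) = x + (k + 1/2) by ring]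
      linear_combination e2 - e1)
  exact ⟨_, by rw [← hper]; ring⟩

lemma degree_add (h : Coeffs p q a b) (k : ℤ) :
    (q (-k - 1)).natDegree + (p k).natDegree = 1 := by
  obtain ⟨c, hc⟩ := h.exists_linear k
  have hne : q (-k - 1) * (p k).comp (X - C ((k : ℂ) + 1/2)) ≠ 0 := by
    rw [hc]; exact X_add_C_ne_zero c
  have hd := congrArg natDegree hc
  rw [natDegree_mul (left_ne_zero_of_mul hne) (right_ne_zero_of_mul hne), natDegree_comp,
    natDegree_X_sub_C, natDegree_X_add_C, mul_one] at hd
  exact hd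

lemma ne_zero (h : Coeffs p q a b) (k : ℤ) : p k ≠ 0 := by
  obtain ⟨c, hc⟩ := h.exists_linear k
  intro h0
  rw [h0, zero_comp, mul_zero] at hc
  exact X_add_C_ne_zero c hc.symm

lemma exists_linear_form (h : Coeffs p q a b) (k : ℤ) : ∃ s t : ℂ, p k = C s * X + C t :=
  exists_eq_X_add_C_of_natDegree_le_one (by have := h.degree_add k; omega)

/-- If `p_{-1/2}` is constant but `p_{1/2}` is not, then `q_{-1/2}` is constant as well, so
`L_{-1} = G_{-1/2}²` acts by a multiple of a pure shift. As `p_{3/2}` has degree at most one,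
`[L_{-1}, G_{3/2}] = -2 G_{1/2}` then makes `p_{1/2}` constant, a contradiction. -/
lemma degree_zero_of_degree_neg_one (h : Coeffs p q a b) (hp : (p (-1)).natDegree = 0) :
    (p 0).natDegree = 0 := by
  by_contra hne
  have hq : (q (-1)).natDegree = 0 := by have := h.degree_add 0; norm_num at this; omega
  rw [natDegree_eq_zero] at hp hq
  obtain ⟨u, hu⟩ := hp
  obtain ⟨w, hw⟩ := hq
  obtain ⟨s, t, hst⟩ := h.exists_linear_form 1
  apply hne
  suffices hc : p 0 = C (u * w * s / 2) by rw [hc, natDegree_C]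
  refine Polynomial.funext fun x => ?_
  have e1 := h.lg_e (-1) 1 x
  have e2 := h.gg_e (-1) (-1) (x + (1 + 1/2))
  have e3 := h.gg_o (-1) (-1) x
  norm_num [← hu, ← hw, hst] at e1 e2 e3 ⊢
  linear_combination (1/2) * e1 + (s * (x - 1) + t) / 4 * e3 - (s * x + t) / 4 * e2

/-- The mirror image of `degree_zero_of_degree_neg_one`, using `[L_1, G_{-3/2}] = 2 G_{-1/2}`. -/
lemma degree_neg_one_of_degree_zero (h : Coeffs p q a b) (hp : (p 0).natDegree = 0) :
    (p (-1)).natDegree = 0 := by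
  by_contra hne
  have hq : (q 0).natDegree = 0 := by have := h.degree_add (-1); norm_num at this; omega
  rw [natDegree_eq_zero] at hp hq
  obtain ⟨u, hu⟩ := hp
  obtain ⟨w, hw⟩ := hq
  obtain ⟨s, t, hst⟩ := h.exists_linear_form (-2)
  apply hne
  suffices hc : p (-1) = C (u * w * s / 2) by rw [hc, natDegree_C]
  refine Polynomial.funext fun x => ?_
  have e1 := h.lg_e 1 (-2) x
  have e2 := h.gg_e 0 0 (x + (-2 + 1/2))
  have e3 := h.gg_o 0 0 x
  norm_num [← hu, ← hw, hst] at e1 e2 e3 ⊢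
  linear_combination (-1/2) * e1 - (s * (x + 1) + t) / 4 * e3 + (s * x + t) / 4 * e2

end Coeffs

/-! ### Solving for the structure polynomials -/

/-- The operator `P(x) ↦ (x + β) P(x + ε) - (x + γ) P(x)` is injective on polynomials of degree
at most one when its eigenvalues `β - γ` and `β - γ + ε` do not vanish. -/
lemma difference_eq_unique {s t s' t' β γ ε : ℂ} (h0 : β - γ ≠ 0) (h1 : β - γ + ε ≠ 0)
    (h : ∀ x : ℂ, (x + β) * (s * (x + ε) + t) - (x + γ) * (s * x + t)
      = (x + β) * (s' * (x + ε) + t') - (x + γ) * (s' * x + t')) : s = s' ∧ t = t' := by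
  have hs : s = s' := by
    apply mul_right_cancel₀ h1
    linear_combination h 1 - h 0
  subst hs
  refine ⟨rfl, ?_⟩
  apply mul_right_cancel₀ h0
  linear_combination h 0

namespace Coeffs

variable {p q a b : ℤ → ℂ[X]}

/-- `p k` and `q k` are the structure polynomials of `Ω_NS(l, α)`, with the odd generator
rescaled by `u`. -/
def IsOmega (p q : ℤ → ℂ[X]) (l α u : ℂ) (k : ℤ) : Prop :=
  p k = C (u * l ^ k) ∧ q k = C (u⁻¹ * l ^ (k + 1)) * (X + C (2 * ((k : ℂ) + 1/2) * α))

lemma IsOmega.a_eq (h : Coeffs p q a b) {l α u : ℂ} (hl : l ≠ 0) (hu : u ≠ 0)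
    (h0 : IsOmega p q l α u 0) {m : ℤ} (hm : IsOmega p q l α u (m - 1)) (x : ℂ) :
    (a m).eval x = l ^ m * (x + m * α) ∧ (b m).eval x = l ^ m * (x + m * (α + 1/2)) := by
  have e1 := h.gg_e (m - 1) 0 x
  have e2 := h.gg_o (m - 1) 0 x
  rw [show m - 1 + 0 + 1 = m by ring] at e1 e2
  rw [h0.1, h0.2, hm.1, hm.2] at e1 e2
  simp only [eval_mul, eval_add, eval_C, eval_X, zpow_zero, zero_add, zpow_one,
    sub_add_cancel, zpow_sub₀ hl] at e1 e2
  push_cast at e1 e2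
  field_simp at e1 e2
  constructor
  · linear_combination (-1/2) * e1
  · linear_combination (-1/4) * e2

/-- The relation `[L_m, G_{j+1/2}] ∈ ℂ G_{m+j+1/2}` propagates the shape of the structure
polynomials from the index `m + j` to the index `j`. -/
lemma IsOmega.step (h : Coeffs p q a b) {l α u : ℂ} (hl : l ≠ 0) (hu : u ≠ 0)
    (h0 : IsOmega p q l α u 0) {m j : ℤ} (hm : IsOmega p q l α u (m - 1))
    (hk : IsOmega p q l α u (m + j))
    (c1 : m - 2 * j - 1 ≠ 0) (c2 : 3 * m - 2 * j - 1 ≠ 0) (c3 : m + 2 * j + 1 ≠ 0) :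
    IsOmega p q l α u j := by
  have d1 : (m : ℂ) - 2 * j - 1 ≠ 0 := by exact_mod_cast c1
  have d2 : 3 * (m : ℂ) - 2 * j - 1 ≠ 0 := by exact_mod_cast c2
  have d3 : (m : ℂ) + 2 * j + 1 ≠ 0 := by exact_mod_cast c3
  have hlm : l ^ m ≠ 0 := zpow_ne_zero _ hl
  have hlj : l ^ j ≠ 0 := zpow_ne_zero _ hl
  obtain ⟨s, t, hp⟩ := h.exists_linear_form j
  obtain ⟨s', t', hq⟩ := h.swap.exists_linear_form j
  have E1 : s = 0 ∧ t = u * l ^ j := by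
    apply difference_eq_unique (β := m * (α + 1/2)) (γ := j + 1/2 + m * α) (ε := m)
    · intro h0; apply d1; linear_combination 2 * h0
    · intro h0; apply d2; linear_combination 2 * h0
    intro x
    have e := h.lg_e m j x
    rw [(IsOmega.a_eq h hl hu h0 hm _).1, (IsOmega.a_eq h hl hu h0 hm _).2, hk.1, hp] at e
    simp only [eval_mul, eval_add, eval_C, eval_X, zpow_add₀ hl] at e
    apply mul_left_cancel₀ hlm
    linear_combination e
  have E2 : s' = u⁻¹ * l ^ (j + 1) ∧ t' = u⁻¹ * l ^ (j + 1) * (2 * ((j : ℂ) + 1/2) * α) := by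
    apply difference_eq_unique (β := m * α) (γ := j + 1/2 + m * (α + 1/2)) (ε := m)
    · intro h0; apply d3; linear_combination -2 * h0
    · intro h0; apply d1; linear_combination 2 * h0
    intro x
    have e := h.lg_o m j x
    rw [(IsOmega.a_eq h hl hu h0 hm _).1, (IsOmega.a_eq h hl hu h0 hm _).2, hk.2, hq] at e
    simp only [eval_mul, eval_add, eval_C, eval_X, zpow_add₀ hl, zpow_one] at e ⊢
    push_cast at e
    apply mul_left_cancel₀ hlm
    linear_combination e
  refine ⟨?_, ?_⟩
  · rw [hp, E1.1, E1.2]; simp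
  · rw [hq, E2.1, E2.2, C_mul (b := _ * α)]; ring

/-- When `G_{1/2}` sends the even generator to a scalar multiple of the odd one, all structure
polynomials are those of some `Ω_NS(l, α)`. -/
lemma exists_isOmega (h : Coeffs p q a b) (hp0 : (p 0).natDegree = 0) :
    ∃ l α u : ℂ, l ≠ 0 ∧ u ≠ 0 ∧ ∀ k, IsOmega p q l α u k := by
  have hp1 := h.degree_neg_one_of_degree_zero hp0
  have n0 := h.ne_zero 0
  have n1 := h.ne_zero (-1)
  rw [natDegree_eq_zero] at hp0 hp1
  obtain ⟨u, hu⟩ := hp0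
  obtain ⟨u', hu'⟩ := hp1
  have u0 : u ≠ 0 := by rintro rfl; apply n0; rw [← hu, C_0]
  have u1 : u' ≠ 0 := by rintro rfl; apply n1; rw [← hu', C_0]
  obtain ⟨c, hc⟩ := h.exists_linear 0
  have l0 : u / u' ≠ 0 := div_ne_zero u0 u1
  have hA : ∀ x, (q (-1)).eval x * u = x + c := fun x => by
    simpa [← hu] using congrArg (eval x) hc
  have o1 : IsOmega p q (u / u') (-c) u (-1) := by
    refine ⟨by rw [← hu']; congr 1; rw [zpow_neg_one]; field_simp,
      Polynomial.funext fun x => ?_⟩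
    have := hA x
    simp only [eval_mul, eval_add, eval_C, eval_X]
    norm_num
    field_simp
    linear_combination this
  have o0 : IsOmega p q (u / u') (-c) u 0 := by
    refine ⟨by simp [hu], Polynomial.funext fun x => ?_⟩
    have e := h.gg_e 0 (-1) x
    have := hA x
    norm_num [← hu, ← hu', h.a_zero] at e
    simp only [eval_mul, eval_add, eval_C, eval_X]
    norm_num
    field_simp
    linear_combination e - this
  refine ⟨u / u', -c, u, l0, u0, ?_⟩
  have om2 : IsOmega p q (u / u') (-c) u (-1 - 1) :=
    IsOmega.step h l0 u0 o0 (m := 1) (by simpa using o0) (by simpa using o1)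
      (by norm_num) (by norm_num) (by norm_num)
  have up : ∀ n : ℕ, IsOmega p q (u / u') (-c) u n := by
    intro n
    induction n with
    | zero => simpa using o0
    | succ n ih =>
      exact IsOmega.step h l0 u0 o0 (m := -1) om2 (by simpa using ih)
        (by push_cast; omega) (by push_cast; omega) (by push_cast; omega)
  have down : ∀ n : ℕ, IsOmega p q (u / u') (-c) u (-1 - n) := by
    intro n
    induction n with
    | zero => simpa using o1
    | succ n ih =>
      refine IsOmega.step h l0 u0 o0 (m := 1) (by simpa using o0) ?_
        (by push_cast; omega) (by push_cast; omega) (by push_cast; omega)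
      rwa [show (1 : ℤ) + (-1 - ((n + 1 : ℕ) : ℤ)) = -1 - n by push_cast; ring]
  intro k
  rcases le_or_gt 0 k with hk | hk
  · lift k to ℕ using hk
    exact up k
  · have := down (-1 - k).toNat
    rwa [Int.toNat_of_nonneg (by omega), sub_sub_cancel] at this

end Coeffs

/-! ### From representations to structure polynomials and back -/

/-- The parity change of a representation. -/
def NSRep.swap {M0 M1 : Type*} [AddCommGroup M0] [Module ℂ M0] [AddCommGroup M1] [Module ℂ M1]
    (ρ : NSRep M0 M1) : NSRep M1 M0 where
  LE := ρ.LO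
  LO := ρ.LE
  GEO := ρ.GOE
  GOE := ρ.GEO
  ll_e := ρ.ll_o
  ll_o := ρ.ll_e
  lg_e := ρ.lg_o
  lg_o := ρ.lg_e
  gg_e := ρ.gg_o
  gg_o := ρ.gg_e

/-- Coordinates on `M0` and `M1` in which `L_0` is multiplication by `X` turn every generator of
`NS` into a shift followed by multiplication by a structure polynomial. -/
lemma NSRep.exists_coeffs {M0 M1 : Type*} [AddCommGroup M0] [Module ℂ M0]
    [AddCommGroup M1] [Module ℂ M1] (ρ : NSRep M0 M1)
    (e0 : M0 ≃ₗ[ℂ] ℂ[X]) (e1 : M1 ≃ₗ[ℂ] ℂ[X])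
    (h0 : ∀ v, e0 (ρ.LE 0 v) = X * e0 v) (h1 : ∀ w, e1 (ρ.LO 0 w) = X * e1 w) :
    ∃ p q a b : ℤ → ℂ[X], Coeffs p q a b ∧
      (∀ k v, e1 (ρ.GEO k v) = (e0 v).comp (X + C ((k : ℂ) + 1/2)) * p k) ∧
      (∀ k w, e0 (ρ.GOE k w) = (e1 w).comp (X + C ((k : ℂ) + 1/2)) * q k) ∧
      (∀ m v, e0 (ρ.LE m v) = (e0 v).comp (X + C (m : ℂ)) * a m) ∧
      (∀ m w, e1 (ρ.LO m w) = (e1 w).comp (X + C (m : ℂ)) * b m) := by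
  have h0' : ∀ f, e0.symm (X * f) = ρ.LE 0 (e0.symm f) := fun f => by
    rw [LinearEquiv.symm_apply_eq, h0, e0.apply_symm_apply]
  have h1' : ∀ f, e1.symm (X * f) = ρ.LO 0 (e1.symm f) := fun f => by
    rw [LinearEquiv.symm_apply_eq, h1, e1.apply_symm_apply]
  have P : ∀ k v, e1 (ρ.GEO k v) = (e0 v).comp (X + C ((k : ℂ) + 1/2)) *
      e1 (ρ.GEO k (e0.symm 1)) := by
    intro k v
    have := shift_operator (e1.toLinearMap ∘ₗ ρ.GEO k ∘ₗ e0.symm.toLinearMap) ((k : ℂ) + 1/2)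
      (fun f => by
        have := congrArg e1 (ρ.lg_e 0 k (e0.symm f))
        simp only [map_sub, map_smul, h1, zero_add, smul_eq_C_mul] at this
        simp only [LinearMap.comp_apply, LinearEquiv.coe_coe, h0']
        rw [Int.cast_zero, zero_div, C_0] at this
        linear_combination -this) (e0 v)
    simpa using this
  have Q : ∀ k w, e0 (ρ.GOE k w) = (e1 w).comp (X + C ((k : ℂ) + 1/2)) *
      e0 (ρ.GOE k (e1.symm 1)) := by
    intro k w
    have := shift_operator (e0.toLinearMap ∘ₗ ρ.GOE k ∘ₗ e1.symm.toLinearMap) ((k : ℂ) + 1/2)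
      (fun f => by
        have := congrArg e0 (ρ.lg_o 0 k (e1.symm f))
        simp only [map_sub, map_smul, h0, zero_add, smul_eq_C_mul] at this
        simp only [LinearMap.comp_apply, LinearEquiv.coe_coe, h1']
        rw [Int.cast_zero, zero_div, C_0] at this
        linear_combination -this) (e1 w)
    simpa using this
  have A : ∀ m v, e0 (ρ.LE m v) = (e0 v).comp (X + C (m : ℂ)) * e0 (ρ.LE m (e0.symm 1)) := by
    intro m v
    have := shift_operator (e0.toLinearMap ∘ₗ ρ.LE m ∘ₗ e0.symm.toLinearMap) (m : ℂ)
      (fun f => by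
        have := congrArg e0 (ρ.ll_e 0 m (e0.symm f))
        simp only [map_sub, map_smul, h0, zero_add, zero_sub, smul_eq_C_mul] at this
        simp only [LinearMap.comp_apply, LinearEquiv.coe_coe, h0']
        rw [Int.cast_neg, C_neg] at this
        linear_combination -this) (e0 v)
    simpa using this
  have B : ∀ m w, e1 (ρ.LO m w) = (e1 w).comp (X + C (m : ℂ)) * e1 (ρ.LO m (e1.symm 1)) := by
    intro m w
    have := shift_operator (e1.toLinearMap ∘ₗ ρ.LO m ∘ₗ e1.symm.toLinearMap) (m : ℂ)
      (fun f => by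
        have := congrArg e1 (ρ.ll_o 0 m (e1.symm f))
        simp only [map_sub, map_smul, h1, zero_add, zero_sub, smul_eq_C_mul] at this
        simp only [LinearMap.comp_apply, LinearEquiv.coe_coe, h1']
        rw [Int.cast_neg, C_neg] at this
        linear_combination -this) (e1 w)
    simpa using this
  refine ⟨fun k => e1 (ρ.GEO k (e0.symm 1)), fun k => e0 (ρ.GOE k (e1.symm 1)),
    fun m => e0 (ρ.LE m (e0.symm 1)), fun m => e1 (ρ.LO m (e1.symm 1)),
    ⟨?_, ?_, ?_, ?_, ?_, ?_⟩, P, Q, A, B⟩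
  · simp [h0]
  · simp [h1]
  · intro m k x
    have := congrArg (fun v => (e1 v).eval x) (ρ.lg_e m k (e0.symm 1))
    simp only [map_sub, map_smul, eval_sub, eval_smul, smul_eq_mul] at this
    rw [B m (ρ.GEO k _), P k (ρ.LE m _)] at this
    simp only [eval_mul, eval_comp, eval_add, eval_X, eval_C] at this
    linear_combination this
  · intro m k x
    have := congrArg (fun v => (e0 v).eval x) (ρ.lg_o m k (e1.symm 1))
    simp only [map_sub, map_smul, eval_sub, eval_smul, smul_eq_mul] at this
    rw [A m (ρ.GOE k _), Q k (ρ.LO m _)] at this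
    simp only [eval_mul, eval_comp, eval_add, eval_X, eval_C] at this
    linear_combination this
  · intro k j x
    have := congrArg (fun v => (e0 v).eval x) (ρ.gg_e k j (e0.symm 1))
    simp only [map_add, map_smul, eval_add, eval_smul, smul_eq_mul] at this
    rw [Q k (ρ.GEO j _), Q j (ρ.GEO k _)] at this
    simp only [eval_mul, eval_comp, eval_add, eval_X, eval_C] at this
    linear_combination this
  · intro k j x
    have := congrArg (fun v => (e1 v).eval x) (ρ.gg_o k j (e1.symm 1))
    simp only [map_add, map_smul, eval_add, eval_smul, smul_eq_mul] at this
    rw [P k (ρ.GOE j _), P j (ρ.GOE k _)] at this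
    simp only [eval_mul, eval_comp, eval_add, eval_X, eval_C] at this
    linear_combination this

/-- Classification in coordinates, when `G_{1/2}` sends the even generator to a scalar multiple
of the odd one: dividing the odd coordinate by `u` gives `Ω_NS(l, α)`. -/
lemma NSRep.iso_of_coeffs {M0 M1 : Type*} [AddCommGroup M0] [Module ℂ M0]
    [AddCommGroup M1] [Module ℂ M1] (ρ : NSRep M0 M1)
    (e0 : M0 ≃ₗ[ℂ] ℂ[X]) (e1 : M1 ≃ₗ[ℂ] ℂ[X]) {p q a b : ℤ → ℂ[X]} (h : Coeffs p q a b)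
    (hp : ∀ k v, e1 (ρ.GEO k v) = (e0 v).comp (X + C ((k : ℂ) + 1/2)) * p k)
    (hq : ∀ k w, e0 (ρ.GOE k w) = (e1 w).comp (X + C ((k : ℂ) + 1/2)) * q k)
    (ha : ∀ m v, e0 (ρ.LE m v) = (e0 v).comp (X + C (m : ℂ)) * a m)
    (hb : ∀ m w, e1 (ρ.LO m w) = (e1 w).comp (X + C (m : ℂ)) * b m)
    (hdeg : (p 0).natDegree = 0) :
    ∃ (l : ℂ), l ≠ 0 ∧ ∃ (a : ℂ) (f0 : M0 ≃ₗ[ℂ] ℂ[X]) (f1 : M1 ≃ₗ[ℂ] ℂ[X]),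
      ∀ (m k : ℤ) (v : M0) (w : M1),
        f0 (ρ.LE m v) = l0 l a m (f0 v) ∧ f1 (ρ.LO m w) = nl1 l a m (f1 w)
        ∧ f1 (ρ.GEO k v) = ng01 l k (f0 v) ∧ f0 (ρ.GOE k w) = ng10 l a k (f1 w) := by
  obtain ⟨l, α, u, hl, hu, hO⟩ := h.exists_isOmega hdeg
  have haeq : ∀ m, a m = C (l ^ m) * (X + C ((m : ℂ) * α)) := fun m =>
    Polynomial.funext fun x => by
      simpa using (Coeffs.IsOmega.a_eq h hl hu (hO 0) (hO (m - 1)) x).1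
  have hbeq : ∀ m, b m = C (l ^ m) * (X + C ((m : ℂ) * (α + 1/2))) := fun m =>
    Polynomial.funext fun x => by
      simpa using (Coeffs.IsOmega.a_eq h hl hu (hO 0) (hO (m - 1)) x).2
  refine ⟨l, hl, α, e0, e1 ≪≫ₗ LinearEquiv.smulOfNeZero ℂ ℂ[X] u⁻¹ (inv_ne_zero hu),
    fun m k v w => ?_⟩
  have f1 : ∀ w, (e1 ≪≫ₗ LinearEquiv.smulOfNeZero ℂ ℂ[X] u⁻¹ (inv_ne_zero hu)) w
      = C u⁻¹ * e1 w := fun w => by rw [← smul_eq_C_mul]; rfl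
  have hCu : C u⁻¹ * C u = (1 : ℂ[X]) := by rw [← C_mul, inv_mul_cancel₀ hu, C_1]
  simp only [f1, l0, nl1, ng01, ng10, smul_eq_C_mul, mul_comp, C_comp]
  refine ⟨?_, ?_, ?_, ?_⟩
  · rw [ha, haeq]; ring
  · rw [hb, hbeq]; ring
  · rw [hp, (hO k).1, C_mul]; linear_combination (C (l ^ k) * (e0 v).comp _) * hCu
  · rw [hq, (hO k).2, C_mul]; ring

/-- If one of the two homogeneous parts vanishes then `G_r = 0` for all `r`, hence
`L_0 = (G_{1/2} G_{-1/2} + G_{-1/2} G_{1/2}) / 2` vanishes. -/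
lemma NSRep.L0_eq_zero {M0 M1 : Type*} [AddCommGroup M0] [Module ℂ M0]
    [AddCommGroup M1] [Module ℂ M1] (ρ : NSRep M0 M1) (h : Subsingleton M0 ∨ Subsingleton M1) :
    ρ.LE 0 = 0 ∧ ρ.LO 0 = 0 := by
  have key : ∀ v w, ρ.GEO 0 v = 0 ∧ ρ.GEO (-1) v = 0 ∧ ρ.GOE 0 w = 0 ∧ ρ.GOE (-1) w = 0 := by
    intro v w
    rcases h with h | h
    · simp [Subsingleton.elim v 0, eq_iff_true_of_subsingleton]
    · simp [Subsingleton.elim w 0, eq_iff_true_of_subsingleton]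
  constructor
  · ext v
    have := ρ.gg_e 0 (-1) v
    simpa [(key v 0).1, (key v 0).2.1] using this.symm
  · ext w
    have := ρ.gg_o 0 (-1) w
    simpa [(key 0 w).2.2.1, (key 0 w).2.2.2] using this.symm

/-- if `M = M0 ⊕ M1` is an `NS`-module whose restriction to
`U(𝔥) = ℂ[L_0]` is free of rank 2 (i.e. there are `v, w ∈ M` such that
`(f, g) ↦ f(L_0)v + g(L_0)w` is a bijection `ℂ[L_0]² → M`), then up to parity change
`M ≅ Ω_NS(λ,α)` for some `λ ∈ ℂ*`, `α ∈ ℂ`. -/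
theorem ns_free_rank_two_classification (M0 M1 : Type*)
    [AddCommGroup M0] [Module ℂ M0] [AddCommGroup M1] [Module ℂ M1]
    (ρ : NSRep M0 M1)
    (hfree : ∃ v w : M0 × M1,
      Function.Bijective (fun p : Polynomial ℂ × Polynomial ℂ =>
        Polynomial.aeval ((ρ.LE 0).prodMap (ρ.LO 0)) p.1 v
          + Polynomial.aeval ((ρ.LE 0).prodMap (ρ.LO 0)) p.2 w)) :
    ∃ (l : ℂ), l ≠ 0 ∧ ∃ (a : ℂ) (e0 : M0 ≃ₗ[ℂ] Polynomial ℂ) (e1 : M1 ≃ₗ[ℂ] Polynomial ℂ),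
      (∀ (m k : ℤ) (v : M0) (w : M1),
          e0 (ρ.LE m v) = l0 l a m (e0 v) ∧ e1 (ρ.LO m w) = nl1 l a m (e1 w)
          ∧ e1 (ρ.GEO k v) = ng01 l k (e0 v) ∧ e0 (ρ.GOE k w) = ng10 l a k (e1 w))
      ∨ (∀ (m k : ℤ) (v : M0) (w : M1),
          e0 (ρ.LE m v) = nl1 l a m (e0 v) ∧ e1 (ρ.LO m w) = l0 l a m (e1 w)
          ∧ e1 (ρ.GEO k v) = ng10 l a k (e0 v) ∧ e0 (ρ.GOE k w) = ng01 l k (e1 w)) := by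
  have hne : ¬ (Subsingleton M0 ∨ Subsingleton M1) := by
    intro h
    obtain ⟨v, w, hb⟩ := hfree
    obtain ⟨z0, z1⟩ := ρ.L0_eq_zero h
    have := @hb.1 (X, 0) (0, 0) (by simp [z0, z1])
    exact X_ne_zero (congrArg Prod.fst this)
  rw [not_or] at hne
  obtain ⟨e0, e1, h0, h1⟩ := exists_coordinates (ρ.LE 0) (ρ.LO 0) hfree hne.1 hne.2
  obtain ⟨p, q, a, b, h, hp, hq, ha, hb⟩ := ρ.exists_coeffs e0 e1 h0 h1
  by_cases hdeg : (p 0).natDegree = 0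
  · obtain ⟨l, hl, α, f0, f1, hf⟩ := ρ.iso_of_coeffs e0 e1 h hp hq ha hb hdeg
    exact ⟨l, hl, α, f0, f1, Or.inl hf⟩
  · -- `q_{-1/2}` and `p_{1/2}` have total degree one, so here the odd generator plays the role
    -- of the even one.
    have hq1 : (q (-1)).natDegree = 0 := by
      have := h.degree_add 0
      norm_num at this
      omega
    obtain ⟨l, hl, α, f1, f0, hf⟩ := ρ.swap.iso_of_coeffs e1 e0 h.swap hq hp hb ha
      (h.swap.degree_zero_of_degree_neg_one hq1)
    refine ⟨l, hl, α, f0, f1, Or.inr fun m k v w => ?_⟩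
    obtain ⟨k1, k2, k3, k4⟩ := hf m k w v
    exact ⟨k2, k1, k4, k3⟩
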